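/- arXiv:2108.09173 — 4 statements merged into one kernel-verified Lean document; each statement's English description precedes it below -/
import Mathlib

section
/- Let E be a real Hilbert space, p, n ∈ ℕ, and for each ι ∈ Fin p let f^ι : E → ℝ be differentiable with gradient ∇f^ι. Let γ₀ ≥ 0 and γ : Fin p → ℝ be nonnegative with γ₀ + Σ_ι γ ι = 1, let W : Fin n → Fin n → ℝ be doubly stochastic, let α ≥ 0, v : Fin n → E, ε : Fin n → Fin p → E, and x* ∈ E. Define the SRDO update x j := γ₀ • v j + Σ_ι γ ι • (v j − α • (∇f^ι (v j) − ε j ι)) and the consensus step v' l := Σ_j W l j • x j. Then Σ_l ‖v' l − x*‖² ≤ Σ_j ‖v j − x*‖² + 2α Σ_j Σ_ι γ ι ⟨∇f^ι(v j), x* − v j⟩ + 2α Σ_j Σ_ι γ ι ⟨ε j ι, v j − x*⟩ + 2(1−γ₀) α² Σ_j Σ_ι γ ι (‖∇f^ι(v j)‖² + ‖ε j ι‖²). -/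
open RealInnerProductSpace

/-!
Consensus with a doubly stochastic matrix averages the squared distances to `x*` (Jensen along
rows) and preserves their total (column sums), so it suffices to bound one server's step. That
step is `v - α • ∑ i, γ i • d i` with `d i = ∇fⁱ v - εᵢ`; expanding the square leaves the
second-order term `α² ‖∑ i, γ i • d i‖²`. Cauchy–Schwarz for the weights `γ`, whose total
mass is `1 - γ₀`, produces the factor `1 - γ₀`.
-/

/-- The expected local update of an SRDO server at `v`: with weight `γ₀` it stays put, and with
weight `γ i` it moves by the step size `α` against the direction `d i` decoded from partition `i`.
The directions are arbitrary vectors; SRDO takes the gradient minus the decoding error. -/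
def srdoStep {R ι E : Type*} [Semiring R] [AddCommGroup E] [Module R E] [Fintype ι]
    (γ₀ : R) (γ : ι → R) (α : R) (v : E) (d : ι → E) : E :=
  γ₀ • v + ∑ i, γ i • (v - α • d i)

theorem srdoStep_eq_sub_smul_sum {R ι E : Type*} [CommSemiring R] [AddCommGroup E] [Module R E]
    [Fintype ι] {γ₀ : R} {γ : ι → R} (hγsum : γ₀ + ∑ i, γ i = 1) (α : R) (v : E) (d : ι → E) :
    srdoStep γ₀ γ α v d = v - α • ∑ i, γ i • d i := by
  simp only [srdoStep, smul_sub, Finset.sum_sub_distrib, Finset.smul_sum, smul_comm α]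
  rw [← Finset.sum_smul, ← add_sub_assoc, ← add_smul, hγsum, one_smul]

section NormedSpace

variable {ι κ E : Type*} [SeminormedAddCommGroup E] [NormedSpace ℝ E]

theorem norm_sum_smul_sq_le_sum_mul_sum_mul_norm_sq (s : Finset ι) {w : ι → ℝ}
    (hw : ∀ i ∈ s, 0 ≤ w i) (y : ι → E) :
    ‖∑ i ∈ s, w i • y i‖ ^ 2 ≤ (∑ i ∈ s, w i) * ∑ i ∈ s, w i * ‖y i‖ ^ 2 :=
  calc ‖∑ i ∈ s, w i • y i‖ ^ 2
      ≤ (∑ i ∈ s, w i * ‖y i‖) ^ 2 := by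
        gcongr
        refine norm_sum_le_of_le s fun i hi => ?_
        rw [norm_smul, Real.norm_of_nonneg (hw i hi)]
    _ ≤ (∑ i ∈ s, w i) * ∑ i ∈ s, w i * ‖y i‖ ^ 2 :=
        Finset.sum_sq_le_sum_mul_sum_of_sq_le_mul s hw
          (fun i hi => mul_nonneg (hw i hi) (sq_nonneg _)) fun i _ => (by ring : _ = _).le

theorem norm_sum_smul_sub_sq_le {s : Finset ι} {w : ι → ℝ} (hw : ∀ i ∈ s, 0 ≤ w i)
    (hwsum : ∑ i ∈ s, w i = 1) (y : ι → E) (c : E) :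
    ‖∑ i ∈ s, w i • y i - c‖ ^ 2 ≤ ∑ i ∈ s, w i * ‖y i - c‖ ^ 2 := by
  have h_center : ∑ i ∈ s, w i • (y i - c) = ∑ i ∈ s, w i • y i - c := by
    simp only [smul_sub, Finset.sum_sub_distrib, ← Finset.sum_smul, hwsum, one_smul]
  simpa only [h_center, hwsum, one_mul] using
    norm_sum_smul_sq_le_sum_mul_sum_mul_norm_sq s hw fun i => y i - c

theorem sum_norm_sum_smul_sub_sq_le [Fintype ι] [Fintype κ] {W : κ → ι → ℝ}
    (hW : ∀ l j, 0 ≤ W l j) (hWrow : ∀ l, ∑ j, W l j = 1) (hWcol : ∀ j, ∑ l, W l j ≤ 1)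
    (x : ι → E) (c : E) :
    ∑ l, ‖∑ j, W l j • x j - c‖ ^ 2 ≤ ∑ j, ‖x j - c‖ ^ 2 :=
  calc ∑ l, ‖∑ j, W l j • x j - c‖ ^ 2
      ≤ ∑ l, ∑ j, W l j * ‖x j - c‖ ^ 2 :=
        Finset.sum_le_sum fun l _ => norm_sum_smul_sub_sq_le (fun j _ => hW l j) (hWrow l) x c
    _ = ∑ j, (∑ l, W l j) * ‖x j - c‖ ^ 2 := by
        simp only [Finset.sum_mul]
        exact Finset.sum_comm
    _ ≤ ∑ j, ‖x j - c‖ ^ 2 :=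
        Finset.sum_le_sum fun j _ => mul_le_of_le_one_left (sq_nonneg _) (hWcol j)

end NormedSpace

theorem norm_sub_sq_le_two_mul_add {E : Type*} [SeminormedAddCommGroup E] (a b : E) :
    ‖a - b‖ ^ 2 ≤ 2 * (‖a‖ ^ 2 + ‖b‖ ^ 2) :=
  (pow_le_pow_left₀ (norm_nonneg _) (norm_sub_le a b) 2).trans add_sq_le

section InnerProductSpace

variable {ι κ κ' E : Type*} [Fintype ι] [SeminormedAddCommGroup E] [InnerProductSpace ℝ E]

theorem norm_srdoStep_sub_sq_le {γ₀ : ℝ} {γ : ι → ℝ} (hγ : ∀ i, 0 ≤ γ i)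
    (hγsum : γ₀ + ∑ i, γ i = 1) (α : ℝ) (v c : E) (d : ι → E) :
    ‖srdoStep γ₀ γ α v d - c‖ ^ 2 ≤
      ‖v - c‖ ^ 2 - 2 * α * ∑ i, γ i * ⟪d i, v - c⟫
        + α ^ 2 * ((1 - γ₀) * ∑ i, γ i * ‖d i‖ ^ 2) :=
  calc ‖srdoStep γ₀ γ α v d - c‖ ^ 2
      = ‖(v - c) - α • ∑ i, γ i • d i‖ ^ 2 := by
        rw [srdoStep_eq_sub_smul_sum hγsum, sub_right_comm]
    _ = ‖v - c‖ ^ 2 - 2 * α * ∑ i, γ i * ⟪d i, v - c⟫ + α ^ 2 * ‖∑ i, γ i • d i‖ ^ 2 := by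
        rw [norm_sub_sq_real, real_inner_comm, real_inner_smul_left, sum_inner, norm_smul, mul_pow,
          Real.norm_eq_abs, sq_abs, mul_assoc]
        simp only [real_inner_smul_left]
    _ ≤ _ := by
        rw [← eq_sub_of_add_eq' hγsum]
        gcongr
        exact norm_sum_smul_sq_le_sum_mul_sum_mul_norm_sq _ (fun i _ => hγ i) d

theorem norm_srdoStep_gradient_sub_error_sub_sq_le {γ₀ : ℝ} {γ : ι → ℝ} (hγ : ∀ i, 0 ≤ γ i)
    (hγsum : γ₀ + ∑ i, γ i = 1) (α : ℝ) (v c : E) (g e : ι → E) :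
    ‖srdoStep γ₀ γ α v (fun i => g i - e i) - c‖ ^ 2 ≤
      ‖v - c‖ ^ 2 + 2 * α * (∑ i, γ i * ⟪g i, c - v⟫) + 2 * α * (∑ i, γ i * ⟪e i, v - c⟫)
        + 2 * (1 - γ₀) * α ^ 2 * (∑ i, γ i * (‖g i‖ ^ 2 + ‖e i‖ ^ 2)) := by
  have h_mass : 0 ≤ 1 - γ₀ :=
    (Finset.sum_nonneg fun i _ => hγ i).trans_eq (eq_sub_of_add_eq' hγsum)
  have h_inner : ∑ i, γ i * ⟪g i - e i, v - c⟫ =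
      -(∑ i, γ i * ⟪g i, c - v⟫) - ∑ i, γ i * ⟪e i, v - c⟫ := by
    rw [← neg_sub v c]
    simp only [inner_sub_left, inner_neg_right, mul_sub, mul_neg, Finset.sum_sub_distrib,
      Finset.sum_neg_distrib, neg_neg]
  have h_norm : ∑ i, γ i * ‖g i - e i‖ ^ 2 ≤ 2 * ∑ i, γ i * (‖g i‖ ^ 2 + ‖e i‖ ^ 2) := by
    rw [Finset.mul_sum]
    refine Finset.sum_le_sum fun i _ => ?_
    rw [mul_left_comm]
    exact mul_le_mul_of_nonneg_left (norm_sub_sq_le_two_mul_add _ _) (hγ i)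
  calc ‖srdoStep γ₀ γ α v (fun i => g i - e i) - c‖ ^ 2
      ≤ ‖v - c‖ ^ 2 - 2 * α * ∑ i, γ i * ⟪g i - e i, v - c⟫
          + α ^ 2 * ((1 - γ₀) * ∑ i, γ i * ‖g i - e i‖ ^ 2) :=
        norm_srdoStep_sub_sq_le hγ hγsum α v c _
    _ ≤ ‖v - c‖ ^ 2 - 2 * α * ∑ i, γ i * ⟪g i - e i, v - c⟫
          + α ^ 2 * ((1 - γ₀) * (2 * ∑ i, γ i * (‖g i‖ ^ 2 + ‖e i‖ ^ 2))) := by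
        gcongr
    _ = _ := by
        rw [h_inner]
        ring

-- The gradient condition is phrased with `innerSL`, since `HasGradientAt` presupposes completeness.
theorem srdo_general_error_bound_general [Fintype κ] [Fintype κ']
    (f : ι → E → ℝ) (gf : ι → E → E) (_hf : ∀ i x, HasFDerivAt (f i) (innerSL ℝ (gf i x)) x)
    {γ₀ : ℝ} {γ : ι → ℝ} (hγ : ∀ i, 0 ≤ γ i) (hγsum : γ₀ + ∑ i, γ i = 1)
    {W : κ' → κ → ℝ} (hW : ∀ l j, 0 ≤ W l j)
    (hWrow : ∀ l, ∑ j, W l j = 1) (hWcol : ∀ j, ∑ l, W l j ≤ 1)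
    (α : ℝ) (v : κ → E) (ε : κ → ι → E) (xstar : E) {x : κ → E}
    (hx : ∀ j, x j = srdoStep γ₀ γ α (v j) fun i => gf i (v j) - ε j i)
    {v' : κ' → E} (hv' : ∀ l, v' l = ∑ j, W l j • x j) :
    ∑ l, ‖v' l - xstar‖ ^ 2 ≤
      ∑ j, ‖v j - xstar‖ ^ 2
      + 2 * α * (∑ j, ∑ i, γ i * ⟪gf i (v j), xstar - v j⟫)
      + 2 * α * (∑ j, ∑ i, γ i * ⟪ε j i, v j - xstar⟫)
      + 2 * (1 - γ₀) * α ^ 2 * (∑ j, ∑ i, γ i * (‖gf i (v j)‖ ^ 2 + ‖ε j i‖ ^ 2)) := by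
  have h_consensus : ∑ l, ‖v' l - xstar‖ ^ 2 ≤ ∑ j, ‖x j - xstar‖ ^ 2 := by
    simpa only [hv'] using sum_norm_sum_smul_sub_sq_le hW hWrow hWcol x xstar
  have h_local := fun j => norm_srdoStep_gradient_sub_error_sub_sq_le hγ hγsum α (v j) xstar
    (fun i => gf i (v j)) (ε j)
  simp only [← hx] at h_local
  refine h_consensus.trans ((Finset.sum_le_sum fun j _ => h_local j).trans_eq ?_)
  simp only [Finset.sum_add_distrib, ← Finset.mul_sum]

end InnerProductSpace

/-- SRDO basic per-iteration error bound (Lemma `general_error_bound`, deterministic form).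
One SRDO iteration: gradient step with decoding errors followed by a consensus step with a
doubly stochastic matrix. -/
theorem srdo_general_error_bound
    {E : Type*} [NormedAddCommGroup E] [InnerProductSpace ℝ E] [CompleteSpace E]
    (p n : ℕ) (f : Fin p → E → ℝ) (gf : Fin p → E → E)
    (hf : ∀ ι x, HasGradientAt (f ι) (gf ι x) x)
    (γ₀ : ℝ) (γ : Fin p → ℝ) (hγ₀ : 0 ≤ γ₀) (hγ : ∀ ι, 0 ≤ γ ι)
    (hγsum : γ₀ + ∑ ι, γ ι = 1)
    (W : Fin n → Fin n → ℝ) (hW : ∀ i j, 0 ≤ W i j)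
    (hWrow : ∀ i, ∑ j, W i j = 1) (hWcol : ∀ j, ∑ i, W i j = 1)
    (α : ℝ) (hα : 0 ≤ α) (v : Fin n → E) (ε : Fin n → Fin p → E) (xstar : E)
    (x : Fin n → E)
    (hx : ∀ j, x j = γ₀ • v j + ∑ ι, γ ι • (v j - α • (gf ι (v j) - ε j ι)))
    (v' : Fin n → E) (hv' : ∀ l, v' l = ∑ j, W l j • x j) :
    ∑ l, ‖v' l - xstar‖ ^ 2 ≤
      ∑ j, ‖v j - xstar‖ ^ 2
      + 2 * α * (∑ j, ∑ ι, γ ι * ⟪gf ι (v j), xstar - v j⟫)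
      + 2 * α * (∑ j, ∑ ι, γ ι * ⟪ε j ι, v j - xstar⟫)
      + 2 * (1 - γ₀) * α ^ 2 * (∑ j, ∑ ι, γ ι * (‖gf ι (v j)‖ ^ 2 + ‖ε j ι‖ ^ 2)) := by
  exact srdo_general_error_bound_general f gf (fun ι x => (hf ι x).hasFDerivAt) hγ hγsum hW hWrow
    (fun j => (hWcol j).le) α v ε xstar hx hv'
end

section
/- Let E be a real Hilbert space, p, n, H ∈ ℕ, σ > 0, L ≥ 0, c ≥ 0. For each ι ∈ Fin p let f^ι : E → ℝ be σ-strongly convex and differentiable with L-Lipschitz gradient ∇f^ι, and let x* ∈ E satisfy ∇f^ι(x*) = 0 for every ι. Let γ₀ ≥ 0 and γ : Fin p → ℝ be nonnegative with γ₀ + Σ_ι γ ι = 1, let W : ℕ → Fin n → Fin n → ℝ be doubly stochastic for every index, α : ℕ → ℝ nonnegative, and let v : ℕ → Fin n → E satisfy the SRDO recursion v (k+1) l = Σ_j W (k+1) l j • (γ₀ • v k j + Σ_ι γ ι • (v k j − α k • (∇f^ι (v k j) − ε k j ι))), where the errors satisfy ‖ε k j ι‖ ≤ 2 L c M k with M k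 := max over k̂ with max(k−H,0) ≤ k̂ ≤ k and q ∈ Fin n of ‖v k̂ q − x*‖. Set V k := Σ_i ‖v k i − x*‖². Then for every k: V (k+1) ≤ (1 − 2(1−γ₀) σ (α k) + 2(1−γ₀)² L² (α k)²) · V k + 4(1−γ₀) n L c (α k) · max_{max(k−H,0) ≤ k̂ ≤ k} V k̂ + 8(1−γ₀)² n L² c² (α k)² · max_{max(k−H,0) ≤ k̂ ≤ k} V k̂. -/
open RealInnerProductSpace

/-- A function is `σ`-strongly convex if subtracting `σ/2 ‖·‖²` leaves it convex. -/
def StronglyConvexOnUniv {E : Type*} [NormedAddCommGroup E] [InnerProductSpace ℝ E]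
    (σ : ℝ) (f : E → ℝ) : Prop :=
  ConvexOn ℝ Set.univ (fun y => f y - σ / 2 * ‖y‖ ^ 2)

/-- The maximum of `‖v k̂ q − x*‖` over the delay window `max(k−H,0) ≤ k̂ ≤ k` and `q ∈ Fin n`. -/
noncomputable def delayWindowMax {E : Type*} [NormedAddCommGroup E]
    {n : ℕ} (hn : 0 < n) (H : ℕ) (v : ℕ → Fin n → E) (xstar : E) (k : ℕ) : ℝ :=
  (Finset.Icc (k - H) k).sup' (Finset.nonempty_Icc.mpr (Nat.sub_le k H)) fun k' =>
    Finset.univ.sup' (Finset.univ_nonempty_iff.mpr (Fin.pos_iff_nonempty.mp hn)) fun q =>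
      ‖v k' q - xstar‖

/-- The maximum of a real sequence over the delay window `max(k−H,0) ≤ k̂ ≤ k`. -/
noncomputable def windowMax (H : ℕ) (V : ℕ → ℝ) (k : ℕ) : ℝ :=
  (Finset.Icc (k - H) k).sup' (Finset.nonempty_Icc.mpr (Nat.sub_le k H)) V

/-!
For doubly stochastic weights, Jensen's inequality in each row followed by the column sums shows
that the consensus step does not increase `∑ i, ‖z i - x*‖²`, so it suffices to bound one agent.
With `y = x - x*`, its averaged update is a gradient step `y ↦ y - a (G - e)` for the averaged
gradient `G` and error `e`. After expanding the square, strong monotonicity at `x*` controls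
`⟪G, y⟫`, while the Lipschitz and delay bounds control `‖G‖` and `‖e‖`.
-/

section Convexity

theorem sum_map_sum_smul_le_of_mem_doublyStochastic {𝕜 E β n : Type*} [Field 𝕜] [LinearOrder 𝕜]
    [IsStrictOrderedRing 𝕜] [AddCommGroup E] [Module 𝕜 E] [AddCommGroup β] [PartialOrder β]
    [IsOrderedAddMonoid β] [Module 𝕜 β] [IsStrictOrderedModule 𝕜 β] [Fintype n] [DecidableEq n]
    {s : Set E} {φ : E → β} (hφ : ConvexOn 𝕜 s φ) {W : Matrix n n 𝕜}
    (hW : W ∈ doublyStochastic 𝕜 n) {z : n → E} (hz : ∀ j, z j ∈ s) :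
    ∑ i, φ (∑ j, W i j • z j) ≤ ∑ j, φ (z j) :=
  calc
    ∑ i, φ (∑ j, W i j • z j) ≤ ∑ i, ∑ j, W i j • φ (z j) :=
      Finset.sum_le_sum fun i _ => hφ.map_sum_le (fun _ _ => nonneg_of_mem_doublyStochastic hW)
        (sum_row_of_mem_doublyStochastic hW i) fun j _ => hz j
    _ = ∑ j, φ (z j) := by
      rw [Finset.sum_comm]
      simp only [← Finset.sum_smul, sum_col_of_mem_doublyStochastic hW, one_smul]

theorem sum_norm_sum_smul_sub_sq_le_of_mem_doublyStochastic {E n : Type*}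
    [SeminormedAddCommGroup E] [NormedSpace ℝ E] [Fintype n] [DecidableEq n] {W : Matrix n n ℝ}
    (hW : W ∈ doublyStochastic ℝ n) (z : n → E) (x : E) :
    ∑ i, ‖(∑ j, W i j • z j) - x‖ ^ 2 ≤ ∑ j, ‖z j - x‖ ^ 2 := by
  have hφ : ConvexOn ℝ Set.univ fun y : E => ‖y - x‖ ^ 2 := by
    simpa only [dist_eq_norm] using! (convexOn_univ_dist x).pow (fun _ _ => dist_nonneg) 2
  exact sum_map_sum_smul_le_of_mem_doublyStochastic hφ hW fun _ => Set.mem_univ _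

theorem apply_add_fderiv_le_of_convexOn {E : Type*} [NormedAddCommGroup E] [NormedSpace ℝ E]
    {s : Set E} {f : E → ℝ} (hconv : ConvexOn ℝ s f) {f' : E →L[ℝ] ℝ} {x y : E} (hx : x ∈ s)
    (hy : y ∈ s) (hf : HasFDerivAt f f' x) : f x + f' (y - x) ≤ f y := by
  have hline : ConvexOn ℝ (AffineMap.lineMap x y ⁻¹' s) (f ∘ AffineMap.lineMap (k := ℝ) x y) :=
    hconv.comp_affineMap _
  have hderiv : HasDerivAt (f ∘ AffineMap.lineMap (k := ℝ) x y) (f' (y - x)) 0 :=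
    HasFDerivAt.comp_hasDerivAt 0 (by simpa using! hf) AffineMap.hasDerivAt_lineMap
  have hslope := hline.le_slope_of_hasDerivAt (x := 0) (y := 1) (by simpa using hx)
    (by simpa using hy) one_pos hderiv
  simp only [slope_def_field, Function.comp_apply, AffineMap.lineMap_apply_one,
    AffineMap.lineMap_apply_zero, sub_zero, div_one] at hslope
  linarith

variable {E : Type*} [NormedAddCommGroup E] [InnerProductSpace ℝ E] [CompleteSpace E] {σ : ℝ}
  {f : E → ℝ}

theorem StronglyConvexOnUniv.add_inner_add_le (hconv : StronglyConvexOnUniv σ f) {x gx : E}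
    (hx : HasGradientAt f gx x) (y : E) : f x + ⟪gx, y - x⟫ + σ / 2 * ‖y - x‖ ^ 2 ≤ f y := by
  have hderiv := hx.hasFDerivAt.sub ((hasFDerivAt_id x).norm_sq.const_mul (σ / 2))
  have htangent := apply_add_fderiv_le_of_convexOn hconv (Set.mem_univ x) (Set.mem_univ y) hderiv
  have hsq : ‖y - x‖ ^ 2 = ‖y‖ ^ 2 - ‖x‖ ^ 2 - 2 * ⟪x, y - x⟫ := by
    rw [norm_sub_sq_real, inner_sub_right, real_inner_self_eq_norm_sq, real_inner_comm]
    ring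
  simp only [id_eq, ContinuousLinearMap.comp_id, sub_apply, InnerProductSpace.toDual_apply_apply,
    smul_apply, coe_innerSL_apply, nsmul_eq_mul, Nat.cast_ofNat, smul_eq_mul] at htangent
  rw [hsq]
  linarith

theorem StronglyConvexOnUniv.mul_norm_sub_sq_le_inner (hconv : StronglyConvexOnUniv σ f)
    {x y gx gy : E} (hx : HasGradientAt f gx x) (hy : HasGradientAt f gy y) :
    σ * ‖y - x‖ ^ 2 ≤ ⟪gy - gx, y - x⟫ := by
  have hxy := hconv.add_inner_add_le hx y
  have hyx := hconv.add_inner_add_le hy x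
  rw [norm_sub_rev, ← neg_sub y x, inner_neg_right] at hyx
  rw [inner_sub_left]
  linarith

end Convexity

section AveragedStep

theorem norm_sum_smul_le_sum_mul {ι E : Type*} [SeminormedAddCommGroup E] [NormedSpace ℝ E]
    {s : Finset ι} {w : ι → ℝ} (hw : ∀ i ∈ s, 0 ≤ w i) {x : ι → E} {B : ℝ}
    (hx : ∀ i ∈ s, ‖x i‖ ≤ B) : ‖∑ i ∈ s, w i • x i‖ ≤ (∑ i ∈ s, w i) * B := by
  rw [Finset.sum_mul]
  refine norm_sum_le_of_le s fun i hi => ?_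
  rw [norm_smul, Real.norm_of_nonneg (hw i hi)]
  exact mul_le_mul_of_nonneg_left (hx i hi) (hw i hi)

/-- The SRDO update of one server before consensus, averaged over the random pull: with weight
`γ₀` the state `x` is kept, and with weight `γ ι` it is moved by `-a` along the direction `d ι`. -/
def averagedStep {κ R E : Type*} [Fintype κ] [Ring R] [AddCommGroup E] [Module R E]
    (γ₀ : R) (γ : κ → R) (a : R) (x : E) (d : κ → E) : E :=
  γ₀ • x + ∑ ι, γ ι • (x - a • d ι)

theorem averagedStep_eq_sub {κ R E : Type*} [Fintype κ] [CommRing R] [AddCommGroup E] [Module R E]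
    {γ₀ : R} {γ : κ → R} (hγsum : γ₀ + ∑ ι, γ ι = 1) (a : R) (x : E) (d : κ → E) :
    averagedStep γ₀ γ a x d = x - a • ∑ ι, γ ι • d ι := by
  simp only [averagedStep, smul_sub, Finset.sum_sub_distrib, ← Finset.sum_smul, ← add_sub_assoc,
    ← add_smul, hγsum, one_smul, Finset.smul_sum, smul_comm a]

variable {E : Type*} [SeminormedAddCommGroup E] [InnerProductSpace ℝ E]

theorem norm_sub_smul_sub_sq_le {y g e : E} {a μ ℓ δ : ℝ} (ha : 0 ≤ a)
    (hmono : μ * ‖y‖ ^ 2 ≤ ⟪g, y⟫) (hg : ‖g‖ ≤ ℓ * ‖y‖) (he : ‖e‖ ≤ δ) :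
    ‖y - a • (g - e)‖ ^ 2 ≤
      (1 - 2 * μ * a + 2 * ℓ ^ 2 * a ^ 2) * ‖y‖ ^ 2 + 2 * a * δ * ‖y‖ + 2 * a ^ 2 * δ ^ 2 := by
  have hcross : ⟪e, y⟫ ≤ δ * ‖y‖ := (real_inner_le_norm e y).trans (by gcongr)
  have hsq : ‖g - e‖ ^ 2 ≤ 2 * ((ℓ * ‖y‖) ^ 2 + δ ^ 2) :=
    calc
      ‖g - e‖ ^ 2 ≤ (‖g‖ + ‖e‖) ^ 2 := by gcongr; exact norm_sub_le g e
      _ ≤ 2 * (‖g‖ ^ 2 + ‖e‖ ^ 2) := add_sq_le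
      _ ≤ 2 * ((ℓ * ‖y‖) ^ 2 + δ ^ 2) := by gcongr
  calc
    ‖y - a • (g - e)‖ ^ 2 = ‖y‖ ^ 2 - 2 * a * ⟪g, y⟫ + 2 * a * ⟪e, y⟫ + a ^ 2 * ‖g - e‖ ^ 2 := by
      rw [norm_sub_sq_real, real_inner_smul_right, real_inner_comm, inner_sub_left, norm_smul,
        mul_pow, Real.norm_eq_abs, sq_abs]
      ring
    _ ≤ ‖y‖ ^ 2 - 2 * a * (μ * ‖y‖ ^ 2) + 2 * a * (δ * ‖y‖)
          + a ^ 2 * (2 * ((ℓ * ‖y‖) ^ 2 + δ ^ 2)) := by gcongr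
    _ = _ := by ring

theorem norm_averagedStep_sub_sq_le {κ : Type*} [Fintype κ] {γ₀ : ℝ} {γ : κ → ℝ}
    (hγ : ∀ ι, 0 ≤ γ ι) (hγsum : γ₀ + ∑ ι, γ ι = 1) {a σ L δ : ℝ} (ha : 0 ≤ a) {x xstar : E}
    {g e : κ → E} (hmono : ∀ ι, σ * ‖x - xstar‖ ^ 2 ≤ ⟪g ι, x - xstar⟫)
    (hg : ∀ ι, ‖g ι‖ ≤ L * ‖x - xstar‖) (he : ∀ ι, ‖e ι‖ ≤ δ) :
    ‖averagedStep γ₀ γ a x (fun ι => g ι - e ι) - xstar‖ ^ 2 ≤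
      (1 - 2 * (1 - γ₀) * σ * a + 2 * (1 - γ₀) ^ 2 * L ^ 2 * a ^ 2) * ‖x - xstar‖ ^ 2
        + 2 * (1 - γ₀) * a * δ * ‖x - xstar‖ + 2 * (1 - γ₀) ^ 2 * a ^ 2 * δ ^ 2 := by
  have hpull : ∑ ι, γ ι = 1 - γ₀ := eq_sub_of_add_eq' hγsum
  have hmono_avg : (1 - γ₀) * σ * ‖x - xstar‖ ^ 2 ≤ ⟪∑ ι, γ ι • g ι, x - xstar⟫ := by
    simp only [← hpull, mul_assoc, Finset.sum_mul, sum_inner, real_inner_smul_left]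
    exact Finset.sum_le_sum fun ι _ => mul_le_mul_of_nonneg_left (hmono ι) (hγ ι)
  have hg_avg : ‖∑ ι, γ ι • g ι‖ ≤ (1 - γ₀) * L * ‖x - xstar‖ := by
    rw [← hpull, mul_assoc]
    exact norm_sum_smul_le_sum_mul (fun ι _ => hγ ι) fun ι _ => hg ι
  have he_avg : ‖∑ ι, γ ι • e ι‖ ≤ (1 - γ₀) * δ := by
    rw [← hpull]
    exact norm_sum_smul_le_sum_mul (fun ι _ => hγ ι) fun ι _ => he ι
  have hstep : averagedStep γ₀ γ a x (fun ι => g ι - e ι) - xstar =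
      (x - xstar) - a • (∑ ι, γ ι • g ι - ∑ ι, γ ι • e ι) := by
    simp only [averagedStep_eq_sub hγsum, smul_sub, Finset.sum_sub_distrib]
    abel
  rw [hstep]
  exact (norm_sub_smul_sub_sq_le ha hmono_avg hg_avg he_avg).trans_eq (by ring)

theorem norm_averagedStep_sub_sq_le_of_norm_sub_le {κ : Type*} [Fintype κ] {γ₀ : ℝ} {γ : κ → ℝ}
    (hγ : ∀ ι, 0 ≤ γ ι) (hγsum : γ₀ + ∑ ι, γ ι = 1) {a σ L c M : ℝ} (ha : 0 ≤ a) (hL : 0 ≤ L)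
    (hc : 0 ≤ c) {x xstar : E} (hM : ‖x - xstar‖ ≤ M) {g e : κ → E}
    (hmono : ∀ ι, σ * ‖x - xstar‖ ^ 2 ≤ ⟪g ι, x - xstar⟫)
    (hg : ∀ ι, ‖g ι‖ ≤ L * ‖x - xstar‖) (he : ∀ ι, ‖e ι‖ ≤ 2 * L * c * M) :
    ‖averagedStep γ₀ γ a x (fun ι => g ι - e ι) - xstar‖ ^ 2 ≤
      (1 - 2 * (1 - γ₀) * σ * a + 2 * (1 - γ₀) ^ 2 * L ^ 2 * a ^ 2) * ‖x - xstar‖ ^ 2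
        + (4 * (1 - γ₀) * L * c * a + 8 * (1 - γ₀) ^ 2 * L ^ 2 * c ^ 2 * a ^ 2) * M ^ 2 := by
  have hM₀ : 0 ≤ M := (norm_nonneg _).trans hM
  have hpull : 0 ≤ 1 - γ₀ :=
    eq_sub_of_add_eq' hγsum ▸ Finset.sum_nonneg fun ι _ => hγ ι
  have hcross : 2 * (1 - γ₀) * a * (2 * L * c * M) * ‖x - xstar‖ ≤
      2 * (1 - γ₀) * a * (2 * L * c * M) * M := by gcongr
  linarith [norm_averagedStep_sub_sq_le hγ hγsum ha hmono hg he]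

end AveragedStep

section DelayWindow

theorem le_windowMax {H k k' : ℕ} (V : ℕ → ℝ) (hk' : k' ∈ Finset.Icc (k - H) k) :
    V k' ≤ windowMax H V k :=
  Finset.le_sup' V hk'

variable {E : Type*} [NormedAddCommGroup E] {n : ℕ} (hn : 0 < n) (H : ℕ) (v : ℕ → Fin n → E)
  (xstar : E)

theorem norm_sub_le_delayWindowMax (k : ℕ) (q : Fin n) :
    ‖v k q - xstar‖ ≤ delayWindowMax hn H v xstar k :=
  Finset.le_sup'_of_le _ (Finset.right_mem_Icc.mpr (Nat.sub_le k H))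
    (Finset.le_sup' (fun q => ‖v k q - xstar‖) (Finset.mem_univ q))

theorem exists_delayWindowMax_eq (k : ℕ) :
    ∃ k' ∈ Finset.Icc (k - H) k, ∃ q, delayWindowMax hn H v xstar k = ‖v k' q - xstar‖ := by
  obtain ⟨k', hk', hk'_max⟩ := Finset.exists_mem_eq_sup' (Finset.nonempty_Icc.mpr (Nat.sub_le k H))
    fun k' => Finset.univ.sup' (Finset.univ_nonempty_iff.mpr (Fin.pos_iff_nonempty.mp hn)) fun q =>
      ‖v k' q - xstar‖
  obtain ⟨q, -, hq_max⟩ := Finset.exists_mem_eq_sup'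
    (Finset.univ_nonempty_iff.mpr (Fin.pos_iff_nonempty.mp hn)) fun q => ‖v k' q - xstar‖
  exact ⟨k', hk', q, hk'_max.trans hq_max⟩

theorem delayWindowMax_sq_le_windowMax (k : ℕ) :
    delayWindowMax hn H v xstar k ^ 2 ≤ windowMax H (fun k' => ∑ i, ‖v k' i - xstar‖ ^ 2) k := by
  obtain ⟨k', hk', q, hmax⟩ := exists_delayWindowMax_eq hn H v xstar k
  calc
    delayWindowMax hn H v xstar k ^ 2 = ‖v k' q - xstar‖ ^ 2 := by rw [hmax]
    _ ≤ ∑ i, ‖v k' i - xstar‖ ^ 2 :=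
      Finset.single_le_sum (fun i _ => sq_nonneg ‖v k' i - xstar‖) (Finset.mem_univ q)
    _ ≤ windowMax H (fun k' => ∑ i, ‖v k' i - xstar‖ ^ 2) k :=
      le_windowMax (fun k' => ∑ i, ‖v k' i - xstar‖ ^ 2) hk'

end DelayWindow

theorem srdo_strongly_convex_recursion_general
    {E κ : Type*} [NormedAddCommGroup E] [InnerProductSpace ℝ E] [Fintype κ]
    {n : ℕ} (H : ℕ) (hn : 0 < n) {σ L c : ℝ} (hL : 0 ≤ L) (hc : 0 ≤ c) {g : κ → E → E} {xstar : E}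
    (hmono : ∀ ι u, σ * ‖u - xstar‖ ^ 2 ≤ ⟪g ι u, u - xstar⟫)
    (hgrowth : ∀ ι u, ‖g ι u‖ ≤ L * ‖u - xstar‖)
    {γ₀ : ℝ} {γ : κ → ℝ} (hγ : ∀ ι, 0 ≤ γ ι) (hγsum : γ₀ + ∑ ι, γ ι = 1)
    {W : ℕ → Matrix (Fin n) (Fin n) ℝ} (hW : ∀ k, W k ∈ doublyStochastic ℝ (Fin n))
    {α : ℕ → ℝ} (hα : ∀ k, 0 ≤ α k) {v : ℕ → Fin n → E} {ε : ℕ → Fin n → κ → E}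
    (hrec : ∀ k l, v (k + 1) l = ∑ j, W (k + 1) l j •
      averagedStep γ₀ γ (α k) (v k j) fun ι => g ι (v k j) - ε k j ι)
    (hε : ∀ k j ι, ‖ε k j ι‖ ≤ 2 * L * c * delayWindowMax hn H v xstar k) (k : ℕ) :
    (∑ i, ‖v (k + 1) i - xstar‖ ^ 2) ≤
      (1 - 2 * (1 - γ₀) * σ * α k + 2 * (1 - γ₀) ^ 2 * L ^ 2 * (α k) ^ 2) *
        (∑ i, ‖v k i - xstar‖ ^ 2)
      + 4 * (1 - γ₀) * n * L * c * α k *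
          windowMax H (fun k' => ∑ i, ‖v k' i - xstar‖ ^ 2) k
      + 8 * (1 - γ₀) ^ 2 * n * L ^ 2 * c ^ 2 * (α k) ^ 2 *
          windowMax H (fun k' => ∑ i, ‖v k' i - xstar‖ ^ 2) k := by
  set M := delayWindowMax hn H v xstar k
  set X := windowMax H (fun k' => ∑ i, ‖v k' i - xstar‖ ^ 2) k
  set A := 1 - 2 * (1 - γ₀) * σ * α k + 2 * (1 - γ₀) ^ 2 * L ^ 2 * α k ^ 2
  set B := 4 * (1 - γ₀) * L * c * α k + 8 * (1 - γ₀) ^ 2 * L ^ 2 * c ^ 2 * α k ^ 2 with hB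
  have hagent (j : Fin n) :
      ‖averagedStep γ₀ γ (α k) (v k j) (fun ι => g ι (v k j) - ε k j ι) - xstar‖ ^ 2 ≤
        A * ‖v k j - xstar‖ ^ 2 + B * M ^ 2 :=
    norm_averagedStep_sub_sq_le_of_norm_sub_le hγ hγsum (hα k) hL hc
      (norm_sub_le_delayWindowMax hn H v xstar k j) (hmono · _) (hgrowth · _) (hε k j)
  have hMX : M ^ 2 ≤ X := delayWindowMax_sq_le_windowMax hn H v xstar k
  have hB₀ : 0 ≤ B := by
    have hpull : 0 ≤ 1 - γ₀ :=
      eq_sub_of_add_eq' hγsum ▸ Finset.sum_nonneg fun ι _ => hγ ι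
    have hαk := hα k
    positivity
  calc
    ∑ i, ‖v (k + 1) i - xstar‖ ^ 2
      ≤ ∑ j, ‖averagedStep γ₀ γ (α k) (v k j) (fun ι => g ι (v k j) - ε k j ι) - xstar‖ ^ 2 := by
        simp only [hrec]
        exact sum_norm_sum_smul_sub_sq_le_of_mem_doublyStochastic (hW (k + 1)) _ xstar
    _ ≤ ∑ j, (A * ‖v k j - xstar‖ ^ 2 + B * M ^ 2) := Finset.sum_le_sum fun j _ => hagent j
    _ = A * ∑ j, ‖v k j - xstar‖ ^ 2 + n * (B * M ^ 2) := by
      rw [Finset.sum_add_distrib, ← Finset.mul_sum, Finset.sum_const, Finset.card_univ,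
        Fintype.card_fin, nsmul_eq_mul]
    _ ≤ A * ∑ j, ‖v k j - xstar‖ ^ 2 + n * (B * X) := by gcongr
    _ = _ := by rw [hB]; ring

/-- SRDO one-step contraction estimate for strongly convex partition functions whose common
critical point is the optimizer, with uniformly delay-bounded decoding errors. -/
theorem srdo_strongly_convex_recursion
    {E : Type*} [NormedAddCommGroup E] [InnerProductSpace ℝ E] [CompleteSpace E]
    (p n H : ℕ) (hn : 0 < n) (σ L c : ℝ) (hσ : 0 < σ) (hL : 0 ≤ L) (hc : 0 ≤ c)
    (f : Fin p → E → ℝ) (gf : Fin p → E → E)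
    (hconv : ∀ ι, StronglyConvexOnUniv σ (f ι))
    (hf : ∀ ι x, HasGradientAt (f ι) (gf ι x) x)
    (hlip : ∀ ι u w, ‖gf ι u - gf ι w‖ ≤ L * ‖u - w‖)
    (xstar : E) (hxstar : ∀ ι, gf ι xstar = 0)
    (γ₀ : ℝ) (γ : Fin p → ℝ) (hγ₀ : 0 ≤ γ₀) (hγ : ∀ ι, 0 ≤ γ ι)
    (hγsum : γ₀ + ∑ ι, γ ι = 1)
    (W : ℕ → Fin n → Fin n → ℝ) (hW : ∀ k i j, 0 ≤ W k i j)
    (hWrow : ∀ k i, ∑ j, W k i j = 1) (hWcol : ∀ k j, ∑ i, W k i j = 1)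
    (α : ℕ → ℝ) (hα : ∀ k, 0 ≤ α k)
    (v : ℕ → Fin n → E) (ε : ℕ → Fin n → Fin p → E)
    (hrec : ∀ k l, v (k + 1) l = ∑ j, W (k + 1) l j •
      (γ₀ • v k j + ∑ ι, γ ι • (v k j - α k • (gf ι (v k j) - ε k j ι))))
    (hε : ∀ k j ι, ‖ε k j ι‖ ≤ 2 * L * c * delayWindowMax hn H v xstar k) :
    ∀ k,
      (∑ i, ‖v (k + 1) i - xstar‖ ^ 2) ≤
        (1 - 2 * (1 - γ₀) * σ * α k + 2 * (1 - γ₀) ^ 2 * L ^ 2 * (α k) ^ 2) *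
          (∑ i, ‖v k i - xstar‖ ^ 2)
        + 4 * (1 - γ₀) * n * L * c * α k *
            windowMax H (fun k' => ∑ i, ‖v k' i - xstar‖ ^ 2) k
        + 8 * (1 - γ₀) ^ 2 * n * L ^ 2 * c ^ 2 * (α k) ^ 2 *
            windowMax H (fun k' => ∑ i, ‖v k' i - xstar‖ ^ 2) k :=
  srdo_strongly_convex_recursion_general H hn hL hc
    (fun ι u => by
      simpa only [hxstar, sub_zero] using (hconv ι).mul_norm_sub_sq_le_inner (hf ι xstar) (hf ι u))
    (fun ι u => by simpa only [hxstar, sub_zero] using hlip ι u xstar)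
    hγ hγsum (fun k => mem_doublyStochastic_iff_sum.mpr ⟨hW k, hWrow k, hWcol k⟩) hα hrec hε
end

section
/- Let B ∈ ℕ and let a₁, a₂, ā₂ be real numbers with 0 ≤ a₁, 0 ≤ a₂ ≤ ā₂, and 0 < a₁ + ā₂ ≤ 1. Set ρ := (a₁ + ā₂)^(1/(B+1)). Then a₁ + a₂ · ρ^(−B) ≤ ρ. -/
theorem mul_rpow_one_div_add_one_rpow_neg {s b : ℝ} (hs : 0 ≤ s) (hb : b + 1 ≠ 0) :
    s * (s ^ (1 / (b + 1))) ^ (-b) = s ^ (1 / (b + 1)) := by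
  have exponent_eq : 1 + 1 / (b + 1) * -b = 1 / (b + 1) := by
    field_simp
    ring
  have exponent_ne_zero : 1 + 1 / (b + 1) * -b ≠ 0 := by
    rw [exponent_eq]
    exact one_div_ne_zero hb
  rw [← Real.rpow_mul hs, ← Real.rpow_one_add' hs exponent_ne_zero, exponent_eq]

theorem one_le_rpow_rpow_neg {s p q : ℝ} (hs : 0 < s) (hs' : s ≤ 1) (hp : 0 ≤ p) (hq : 0 ≤ q) :
    1 ≤ (s ^ p) ^ (-q) :=
  Real.one_le_rpow_of_pos_of_le_one_of_nonpos (Real.rpow_pos_of_pos hs p)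
    (Real.rpow_le_one hs.le hs' hp) (neg_nonpos.2 hq)

theorem rho_contraction_inequality_general {b a₁ a₂ a₂bar : ℝ} (hb : 0 ≤ b)
    (ha₁ : 0 ≤ a₁) (hle : a₂ ≤ a₂bar) (hpos : 0 < a₁ + a₂bar) (hone : a₁ + a₂bar ≤ 1) :
    a₁ + a₂ * ((a₁ + a₂bar) ^ (1 / (b + 1))) ^ (-b) ≤ (a₁ + a₂bar) ^ (1 / (b + 1)) := by
  set ρ := (a₁ + a₂bar) ^ (1 / (b + 1))
  have one_le_weight : 1 ≤ ρ ^ (-b) := one_le_rpow_rpow_neg hpos hone (by positivity) hb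
  calc
    a₁ + a₂ * ρ ^ (-b) ≤ a₁ * ρ ^ (-b) + a₂bar * ρ ^ (-b) := by
      gcongr
      exact le_mul_of_one_le_right ha₁ one_le_weight
    _ = (a₁ + a₂bar) * ρ ^ (-b) := (add_mul _ _ _).symm
    _ = ρ := mul_rpow_one_div_add_one_rpow_neg hpos.le (by positivity)

/-- Key elementary inequality of the martingale lemmas of the SRDO analysis:
with `ρ = (a₁ + ā₂)^(1/(B+1))`, one has `a₁ + a₂ ρ^(−B) ≤ ρ`. -/
theorem rho_contraction_inequality
    (B : ℕ) (a₁ a₂ a₂bar : ℝ)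
    (ha₁ : 0 ≤ a₁) (ha₂ : 0 ≤ a₂) (hle : a₂ ≤ a₂bar)
    (hpos : 0 < a₁ + a₂bar) (hone : a₁ + a₂bar ≤ 1) :
    a₁ + a₂ * ((a₁ + a₂bar) ^ ((1 : ℝ) / (B + 1))) ^ (-(B : ℝ)) ≤
      (a₁ + a₂bar) ^ ((1 : ℝ) / (B + 1)) :=
  rho_contraction_inequality_general B.cast_nonneg ha₁ hle hpos hone
end

section
/- Let E be a real normed vector space, n ∈ ℕ, μ ∈ [0,1], and let W : Fin n → Fin n → ℝ satisfy W i j ≥ 0 for all i, j, Σ_j W i j ≤ 1 for every i, and Σ_i W i j ≤ 1 − μ for every j. Then for every x : Fin n → E: Σ_i ‖Σ_j (W i j) • (x j)‖² ≤ (1 − μ) · Σ_j ‖x j‖². -/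
/-! Schur's test. Each row acts as a weighted sum, so Hölder's inequality with respect to its
weights bounds the `p`-th power of the norm of that sum by a power of the row mass times the
weighted sum of the `‖x j‖ ^ p`. Summing over the rows and exchanging the two sums, each
`‖x j‖ ^ p` is counted with the mass of its column. -/

open Finset

theorem rpow_sum_mul_le_rpow_sum_mul_sum_mul_rpow {κ : Type*} (s : Finset κ) {p : ℝ} (hp : 1 ≤ p)
    {w f : κ → ℝ} (hw : ∀ j, 0 ≤ w j) (hf : ∀ j, 0 ≤ f j) :
    (∑ j ∈ s, w j * f j) ^ p ≤ (∑ j ∈ s, w j) ^ (p - 1) * ∑ j ∈ s, w j * f j ^ p := by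
  have hp₀ : p ≠ 0 := by positivity
  have hw_sum : 0 ≤ ∑ j ∈ s, w j := sum_nonneg fun j _ => hw j
  have hwf_sum : 0 ≤ ∑ j ∈ s, w j * f j ^ p :=
    sum_nonneg fun j _ => mul_nonneg (hw j) (Real.rpow_nonneg (hf j) p)
  calc (∑ j ∈ s, w j * f j) ^ p
      ≤ ((∑ j ∈ s, w j) ^ (1 - p⁻¹) * (∑ j ∈ s, w j * f j ^ p) ^ p⁻¹) ^ p :=
        Real.rpow_le_rpow (sum_nonneg fun j _ => mul_nonneg (hw j) (hf j))
          (Real.inner_le_weight_mul_Lp_of_nonneg s hp w f hw hf) (by positivity)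
    _ = (∑ j ∈ s, w j) ^ (p - 1) * ∑ j ∈ s, w j * f j ^ p := by
        rw [Real.mul_rpow (by positivity) (by positivity), Real.rpow_inv_rpow hwf_sum hp₀,
          ← Real.rpow_mul hw_sum, sub_mul, one_mul, inv_mul_cancel₀ hp₀]

theorem sum_sum_mul_le_mul_sum {ι κ R : Type*} [Fintype ι] [Fintype κ]
    [Semiring R] [PartialOrder R] [IsOrderedRing R] {w : ι → κ → R} {f : κ → R} {C : R}
    (hw : ∀ j, ∑ i, w i j ≤ C) (hf : ∀ j, 0 ≤ f j) :
    ∑ i, ∑ j, w i j * f j ≤ C * ∑ j, f j := by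
  rw [sum_comm, mul_sum]
  simp only [← sum_mul]
  exact sum_le_sum fun j _ => mul_le_mul_of_nonneg_right (hw j) (hf j)

section NormedModule

variable {A E : Type*} [SeminormedRing A] [SeminormedAddCommGroup E] [Module A E]
  [IsBoundedSMul A E] {p : ℝ}

theorem norm_sum_smul_rpow_le {κ : Type*} (s : Finset κ) (hp : 1 ≤ p) (a : κ → A) (x : κ → E) :
    ‖∑ j ∈ s, a j • x j‖ ^ p ≤ (∑ j ∈ s, ‖a j‖) ^ (p - 1) * ∑ j ∈ s, ‖a j‖ * ‖x j‖ ^ p :=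
  calc ‖∑ j ∈ s, a j • x j‖ ^ p
      ≤ (∑ j ∈ s, ‖a j‖ * ‖x j‖) ^ p :=
        Real.rpow_le_rpow (norm_nonneg _)
          (norm_sum_le_of_le s fun j _ => norm_smul_le (a j) (x j)) (by positivity)
    _ ≤ (∑ j ∈ s, ‖a j‖) ^ (p - 1) * ∑ j ∈ s, ‖a j‖ * ‖x j‖ ^ p :=
        rpow_sum_mul_le_rpow_sum_mul_sum_mul_rpow s hp (fun _ => norm_nonneg _)
          fun _ => norm_nonneg _

theorem consensus_step_contraction_general {ι κ : Type*} [Fintype ι] [Fintype κ] (hp : 1 ≤ p)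
    {W : ι → κ → A} {R C : ℝ} (hR : 0 ≤ R) (hWrow : ∀ i, ∑ j, ‖W i j‖ ≤ R)
    (hWcol : ∀ j, ∑ i, ‖W i j‖ ≤ C) (x : κ → E) :
    ∑ i, ‖∑ j, W i j • x j‖ ^ p ≤ R ^ (p - 1) * C * ∑ j, ‖x j‖ ^ p :=
  calc ∑ i, ‖∑ j, W i j • x j‖ ^ p
      ≤ ∑ i, (∑ j, ‖W i j‖) ^ (p - 1) * ∑ j, ‖W i j‖ * ‖x j‖ ^ p :=
        sum_le_sum fun i _ => norm_sum_smul_rpow_le univ hp (W i) x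
    _ ≤ ∑ i, R ^ (p - 1) * ∑ j, ‖W i j‖ * ‖x j‖ ^ p := by
        gcongr with i
        exact hWrow i
    _ = R ^ (p - 1) * ∑ i, ∑ j, ‖W i j‖ * ‖x j‖ ^ p := (mul_sum _ _ _).symm
    _ ≤ R ^ (p - 1) * (C * ∑ j, ‖x j‖ ^ p) := by
        gcongr
        exact sum_sum_mul_le_mul_sum hWcol fun j => by positivity
    _ = R ^ (p - 1) * C * ∑ j, ‖x j‖ ^ p := (mul_assoc _ _ _).symm

end NormedModule

/-- Consensus-step contraction of the SRDO algorithm: for a nonnegative matrix with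
substochastic rows and columns summing to at most `1 − μ`, the total squared norm after one
averaging step shrinks by the factor `1 − μ`. -/
theorem consensus_step_contraction
    {E : Type*} [NormedAddCommGroup E] [NormedSpace ℝ E]
    (n : ℕ) (μ : ℝ) (hμ₀ : 0 ≤ μ) (hμ₁ : μ ≤ 1)
    (W : Fin n → Fin n → ℝ) (hW : ∀ i j, 0 ≤ W i j)
    (hWrow : ∀ i, ∑ j, W i j ≤ 1) (hWcol : ∀ j, ∑ i, W i j ≤ 1 - μ) :
    ∀ x : Fin n → E,
      ∑ i, ‖∑ j, W i j • x j‖ ^ 2 ≤ (1 - μ) * ∑ j, ‖x j‖ ^ 2 := by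
  intro x
  simpa using consensus_step_contraction_general one_le_two zero_le_one
    (by simpa only [Real.norm_of_nonneg (hW _ _)] using hWrow)
    (by simpa only [Real.norm_of_nonneg (hW _ _)] using hWcol) x
end
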